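/- For every integer ℓ ≥ 1 and every integer n ≥ 2, setting N = n^ℓ and T = ℓ(n−1), there exist a connection schedule of size N and period T and an assignment to each triple (t,a,b) ∈ ℤ×[N]×[N] of a single path (a 'semi-path') in the virtual topology from (a,t) to the timeline of b of latency at most T, such that for every physical edge e of the virtual topology, the set of triples (t,a,b) whose semi-path traverses e is finite and has cardinality exactly T·n^{ℓ−1}. -/

import Mathlib

/-!
Identify the nodes with the vectors `V = (ℤ/n)^ℓ` and the timeslots modulo `T = ℓ(n-1)` with the
pairs `(p, s)`, where `p` is a coordinate and `s` a nonzero residue; in such a timeslot the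
schedule translates every node by `s • e_p`. The semi-path from `a` at time `t` to `b` lasts exactly
`T` timeslots and takes the physical edge of the slot `(p, s)` iff `(b - a) p = s`. Since `T`
consecutive slots meet each pair exactly once, the displacements add up to `b - a`
(`sum_displacement`).

A semi-path traversing the edge that leaves `v` at time `τ` is determined by the number `k < T` of
steps before the edge and by the difference `d = b - a`: the starting node is then forced, because
the partial displacement depends only on `d` and the starting time. The only constraint on `d` is
that its coordinate at the slot of `τ` has the prescribed value, which leaves `n ^ (ℓ - 1)`
vectors (`card_fixed_coord`), hence `T * n ^ (ℓ - 1)` semi-paths.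
-/

open scoped ENNReal

/-- A connection schedule of size `N` and period `T`: a `T`-periodic sequence of
permutations of `[N]`, indexed by timeslots `t : ℤ`. -/
structure ConnSched (N T : ℕ) where
  Tpos : 0 < T
  perm : ℤ → Equiv.Perm (Fin N)
  periodic : ∀ t : ℤ, perm (t + T) = perm t

/-- A path in the virtual topology, encoded by its starting vertex together with the
list of its steps, where `true` denotes traversing the (unique) outgoing physical edge
and `false` denotes traversing the virtual edge. -/
structure ORNPath (N : ℕ) where
  start : Fin N × ℤ
  steps : List Bool

namespace ORNPath

variable {N T : ℕ}

/-- One step in the virtual topology: from vertex `v`, either follow the physical edge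
(`b = true`) to `(π_t v.1, v.2 + 1)`, or the virtual edge (`b = false`) to `(v.1, v.2+1)`. -/
def stepFn (S : ConnSched N T) (v : Fin N × ℤ) (b : Bool) : Fin N × ℤ :=
  (if b then S.perm v.2 v.1 else v.1, v.2 + 1)

/-- The final vertex of a path. -/
def dest (S : ConnSched N T) (P : ORNPath N) : Fin N × ℤ :=
  P.steps.foldl (stepFn S) P.start

/-- The latency of a path: the total number of (virtual or physical) edges it contains. -/
def latency (P : ORNPath N) : ℕ := P.steps.length

/-- The number of physical edges of a path. -/
def hops (P : ORNPath N) : ℕ := P.steps.count true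

/-- The vertex of a path after `k` steps. -/
def vertexAt (S : ConnSched N T) (P : ORNPath N) (k : ℕ) : Fin N × ℤ :=
  (P.steps.take k).foldl (stepFn S) P.start

/-- A physical edge of the virtual topology is identified by the pair
(sending node, timeslot); the receiving node is determined by the schedule.
`P.usesEdge S e` says that path `P` traverses the physical edge `e`. -/
def usesEdge (S : ConnSched N T) (P : ORNPath N) (e : Fin N × ℤ) : Prop :=
  ∃ k : Fin P.steps.length, P.steps.get k = true ∧ P.vertexAt S k.val = e

/-- Transpose a path by `s` timeslots. -/
def shift (P : ORNPath N) (s : ℤ) : ORNPath N :=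
  ⟨(P.start.1, P.start.2 + s), P.steps⟩

end ORNPath

/-- The amount of flow that `f` sends across the physical edge `e`. -/
noncomputable def edgeFlow {N T : ℕ} (S : ConnSched N T) (f : ORNPath N → ℝ≥0∞)
    (e : Fin N × ℤ) : ℝ≥0∞ :=
  ∑' P : {P : ORNPath N // P.usesEdge S e}, f P.val

/-- A flow is feasible if it places at most one unit of flow on every physical edge. -/
def Feasible {N T : ℕ} (S : ConnSched N T) (f : ORNPath N → ℝ≥0∞) : Prop :=
  ∀ e : Fin N × ℤ, edgeFlow S f e ≤ 1

/-- An ORN design: a connection schedule together with an oblivious routing scheme.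
`route a b t` is a unit flow supported on paths from `(a,t)` to the timeline of `b`,
periodic with period `T`. -/
structure ORNDesign (N T : ℕ) where
  sched : ConnSched N T
  route : Fin N → Fin N → ℤ → ORNPath N → ℝ≥0∞
  route_support : ∀ a b t P, route a b t P ≠ 0 →
    P.start = (a, t) ∧ (P.dest sched).1 = b
  route_unit : ∀ a b t, ∑' P : ORNPath N, route a b t P = 1
  route_periodic : ∀ a b t P, route a b (t + T) (P.shift T) = route a b t P

/-- A demand function `D` (assigning to each timeslot an `N × N` matrix of nonnegative
reals) requests throughput `r` if all row and column sums of every `D t` are at most `r`. -/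
def RequestsThroughput {N : ℕ} (D : ℤ → Fin N → Fin N → ℝ) (r : ℝ) : Prop :=
  (∀ t a b, 0 ≤ D t a b) ∧ (∀ t a, ∑ b, D t a b ≤ r) ∧ (∀ t b, ∑ a, D t a b ≤ r)

/-- The flow induced by routing the demand `D` with the routing scheme of `R`. -/
noncomputable def inducedFlow {N T : ℕ} (R : ORNDesign N T)
    (D : ℤ → Fin N → Fin N → ℝ) (P : ORNPath N) : ℝ≥0∞ :=
  ∑' x : Fin N × Fin N × ℤ,
    ENNReal.ofReal (D x.2.2 x.1 x.2.1) * R.route x.1 x.2.1 x.2.2 P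

/-- An ORN design guarantees throughput `r` if the induced flow is feasible for every
demand function requesting throughput at most `r`. -/
def GuaranteesThroughput {N T : ℕ} (R : ORNDesign N T) (r : ℝ) : Prop :=
  ∀ D : ℤ → Fin N → Fin N → ℝ, RequestsThroughput D r →
    Feasible R.sched (inducedFlow R D)

/-- The maximum latency of the ORN design `R` is at most `L`: every path carrying a
positive amount of flow has latency at most `L`. -/
def MaxLatencyLE {N T : ℕ} (R : ORNDesign N T) (L : ℕ) : Prop :=
  ∀ a b t P, R.route a b t P ≠ 0 → P.latency ≤ L

namespace EBS

variable {ℓ n T : ℕ}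

/-- The translation vector of the timeslot `t`, where `q` labels the timeslots modulo `T` by pairs
of a coordinate and a nonzero residue. -/
def gen (q : ZMod T ≃ Fin ℓ × {s : ZMod n // s ≠ 0}) (t : ℤ) : Fin ℓ → ZMod n :=
  Pi.single (q t).1 ((q t).2 : ZMod n)

/-- The connection schedule that translates by `gen q t` in timeslot `t`, transported to
`Fin (n ^ ℓ)` along `e`. -/
def sched (hT : 0 < T) (q : ZMod T ≃ Fin ℓ × {s : ZMod n // s ≠ 0})
    (e : (Fin ℓ → ZMod n) ≃ Fin (n ^ ℓ)) : ConnSched (n ^ ℓ) T where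
  Tpos := hT
  perm t := (e.symm.trans (Equiv.addRight (gen q t))).trans e
  periodic t := by simp [gen]

/-- Whether a semi-path with total displacement `d` takes the physical edge in timeslot `t`. -/
def takes (q : ZMod T ≃ Fin ℓ × {s : ZMod n // s ≠ 0}) (d : Fin ℓ → ZMod n) (t : ℤ) : Bool :=
  decide (d (q t).1 = ((q t).2 : ZMod n))

/-- The displacement accumulated in the first `m` steps from time `t` by a semi-path with total
displacement `d`. -/
def disp (q : ZMod T ≃ Fin ℓ × {s : ZMod n // s ≠ 0}) (d : Fin ℓ → ZMod n) (t : ℤ) (m : ℕ) :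
    Fin ℓ → ZMod n :=
  ∑ k ∈ Finset.range m, if takes q d (t + k) then gen q (t + k) else 0

/-- The first `m` steps from time `t` of a semi-path with total displacement `d`. -/
def walk (q : ZMod T ≃ Fin ℓ × {s : ZMod n // s ≠ 0}) (d : Fin ℓ → ZMod n) (t : ℤ) (m : ℕ) :
    List Bool :=
  (List.range m).map fun k : ℕ => takes q d (t + k)

lemma foldl_walk (hT : 0 < T) (q : ZMod T ≃ Fin ℓ × {s : ZMod n // s ≠ 0})
    (e : (Fin ℓ → ZMod n) ≃ Fin (n ^ ℓ)) (d : Fin ℓ → ZMod n) (t : ℤ) (a : Fin (n ^ ℓ)) (m : ℕ) :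
    (walk q d t m).foldl (ORNPath.stepFn (sched hT q e)) (a, t)
      = (e (e.symm a + disp q d t m), t + m) := by
  induction m with
  | zero => simp [walk, disp]
  | succ m ih =>
    have hw : walk q d t (m + 1) = walk q d t m ++ [takes q d (t + m)] := by
      simp [walk, List.range_succ]
    have hd : disp q d t (m + 1)
        = disp q d t m + if takes q d (t + m) then gen q (t + m) else 0 := by
      simp only [disp, Finset.sum_range_succ]
    rw [hw, List.foldl_append, ih, hd]
    by_cases h : takes q d (t + m) = true
    · simp [ORNPath.stepFn, sched, h, add_assoc]
    · simp [ORNPath.stepFn, h, add_assoc]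

lemma sum_range_eq_sum_zmod [NeZero T] {M : Type*} [AddCommMonoid M] (h : ZMod T → M) (t : ℤ) :
    ∑ k ∈ Finset.range T, h ((t + k : ℤ) : ZMod T) = ∑ x, h x := by
  rw [← Equiv.sum_comp (Equiv.addLeft (t : ZMod T)) h]
  refine Finset.sum_nbij' (fun k => (k : ZMod T)) ZMod.val ?_ ?_ ?_ ?_ ?_
  · simp
  · intro x _
    simpa using ZMod.val_lt x
  · intro k hk
    exact ZMod.val_cast_of_lt (Finset.mem_range.1 hk)
  · simp
  · simp

/-- Over a full period the semi-path realizes its total displacement: each pair `(p, s)` occurs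
exactly once, and `s • e_p` is used iff `d p = s`. -/
lemma sum_displacement [NeZero T] [NeZero n] (q : ZMod T ≃ Fin ℓ × {s : ZMod n // s ≠ 0})
    (d : Fin ℓ → ZMod n) (t : ℤ) : disp q d t T = d := by
  have h1 : disp q d t T = ∑ i : Fin ℓ × {s : ZMod n // s ≠ 0},
      if d i.1 = (i.2 : ZMod n) then Pi.single i.1 (i.2 : ZMod n) else 0 := by
    rw [← Equiv.sum_comp q, ← sum_range_eq_sum_zmod _ t]
    simp [disp, takes, gen]
  rw [h1, Fintype.sum_prod_type]
  conv_rhs => rw [← Finset.univ_sum_single d]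
  refine Finset.sum_congr rfl fun p _ => ?_
  by_cases h0 : d p = 0
  · rw [h0, Pi.single_zero]
    exact Finset.sum_eq_zero fun s _ => if_neg fun hs => s.2 (hs.symm.trans h0)
  · rw [Finset.sum_eq_single (⟨d p, h0⟩ : {s : ZMod n // s ≠ 0})]
    · simp
    · intro s _ hs
      exact if_neg fun h => hs (Subtype.ext h.symm)
    · simp

lemma card_fixed_coord [NeZero n] (p : Fin ℓ) (s : ZMod n) :
    (Finset.univ.filter fun d : Fin ℓ → ZMod n => d p = s).card = n ^ (ℓ - 1) := by
  have h : (Finset.univ.filter fun d : Fin ℓ → ZMod n => d p = s)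
      = Fintype.piFinset fun i => if i = p then {s} else Finset.univ := by
    ext d
    simp only [Finset.mem_filter, Finset.mem_univ, true_and, Fintype.mem_piFinset]
    constructor
    · intro hd i
      by_cases hi : i = p
      · subst hi; simp [hd]
      · simp [hi]
    · intro hd
      simpa using hd p
  rw [h, Fintype.card_piFinset, ← Finset.mul_prod_erase _ _ (Finset.mem_univ p)]
  rw [Finset.prod_congr rfl (g := fun _ => n)
    (fun i hi => by simp [Finset.ne_of_mem_erase hi, ZMod.card])]
  simp

/-- The semi-path from `a` at time `t` with total displacement `d` uses the edge `(v, τ)` iff it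
moves in timeslot `τ` and, after some `k < T` steps with `t + k = τ`, it stands at `v`. -/
lemma usesEdge_iff (hT : 0 < T) (q : ZMod T ≃ Fin ℓ × {s : ZMod n // s ≠ 0})
    (e : (Fin ℓ → ZMod n) ≃ Fin (n ^ ℓ)) (d : Fin ℓ → ZMod n) (t : ℤ) (a v : Fin (n ^ ℓ)) (τ : ℤ) :
    ORNPath.usesEdge (sched hT q e) ⟨(a, t), walk q d t T⟩ (v, τ) ↔
      ∃ k < T, takes q d τ = true ∧ e.symm a + disp q d t k = e.symm v ∧ t + k = τ := by
  have hv : ∀ k < T, ORNPath.vertexAt (sched hT q e) ⟨(a, t), walk q d t T⟩ k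
      = (e (e.symm a + disp q d t k), t + k) := by
    intro k hk
    rw [← foldl_walk hT]
    simp [ORNPath.vertexAt, walk, ← List.map_take, List.take_range, min_eq_left hk.le]
  have hl : (walk q d t T).length = T := by simp [walk]
  constructor
  · rintro ⟨⟨k, hk⟩, h1, h2⟩
    have hk' : k < T := hl ▸ hk
    rw [hv k hk', Prod.mk.injEq] at h2
    refine ⟨k, hk', ?_, ?_, h2.2⟩
    · rw [← h2.2]
      simpa [walk] using h1
    · rw [← h2.1, Equiv.symm_apply_apply]
  · rintro ⟨k, hk, h1, h2, h3⟩
    refine ⟨⟨k, hl.symm ▸ hk⟩, ?_, ?_⟩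
    · rw [← h3] at h1
      simpa [walk] using h1
    · rw [hv k hk, h2, h3, Equiv.apply_symm_apply]

/-- The semi-path with total displacement `x.2` that traverses the edge `(v, τ)` after `x.1`
steps, recorded as its starting time, starting node and destination. -/
def through (q : ZMod T ≃ Fin ℓ × {s : ZMod n // s ≠ 0}) (e : (Fin ℓ → ZMod n) ≃ Fin (n ^ ℓ))
    (v : Fin (n ^ ℓ)) (τ : ℤ) (x : ℕ × (Fin ℓ → ZMod n)) : ℤ × Fin (n ^ ℓ) × Fin (n ^ ℓ) :=
  (τ - x.1, e (e.symm v - disp q x.2 (τ - x.1) x.1),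
    e (e.symm v - disp q x.2 (τ - x.1) x.1 + x.2))

lemma through_injective (q : ZMod T ≃ Fin ℓ × {s : ZMod n // s ≠ 0})
    (e : (Fin ℓ → ZMod n) ≃ Fin (n ^ ℓ)) (v : Fin (n ^ ℓ)) (τ : ℤ) :
    Function.Injective (through q e v τ) := by
  rintro ⟨k, d⟩ ⟨k', d'⟩ h
  simp only [through, Prod.mk.injEq, EmbeddingLike.apply_eq_iff_eq] at h
  obtain ⟨h1, h2, h3⟩ := h
  rw [h2] at h3
  have hk : k = k' := by omega
  exact Prod.ext hk (add_left_cancel h3)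

lemma set_eq_image [NeZero n] (hT : 0 < T) (q : ZMod T ≃ Fin ℓ × {s : ZMod n // s ≠ 0})
    (e : (Fin ℓ → ZMod n) ≃ Fin (n ^ ℓ)) (v : Fin (n ^ ℓ)) (τ : ℤ) :
    {x : ℤ × Fin (n ^ ℓ) × Fin (n ^ ℓ) | ORNPath.usesEdge (sched hT q e)
        ⟨(x.2.1, x.1), walk q (e.symm x.2.2 - e.symm x.2.1) x.1 T⟩ (v, τ)}
      = ((Finset.range T ×ˢ Finset.univ.filter fun d : Fin ℓ → ZMod n =>
          d (q τ).1 = ((q τ).2 : ZMod n)).map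
            ⟨through q e v τ, through_injective q e v τ⟩ : Finset _) := by
  ext ⟨t, a, b⟩
  simp only [Set.mem_ofPred_eq, usesEdge_iff, Finset.coe_map, Function.Embedding.coeFn_mk,
    Set.mem_image, Finset.mem_coe, Finset.mem_product, Finset.mem_range, Finset.mem_filter,
    Finset.mem_univ, true_and]
  constructor
  · rintro ⟨k, hk, h1, h2, h3⟩
    refine ⟨(k, e.symm b - e.symm a), ⟨hk, by simpa [takes] using h1⟩, ?_⟩
    have ht : τ - (k : ℤ) = t := by omega
    simp only [through, ht, ← h2, add_sub_cancel_right, Equiv.apply_symm_apply,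
      add_sub_cancel]
  · rintro ⟨⟨k, d⟩, ⟨hk, hd⟩, h⟩
    simp only [through, Prod.mk.injEq] at h
    obtain ⟨rfl, rfl, rfl⟩ := h
    refine ⟨k, hk, ?_, ?_, by omega⟩
    · simpa [takes] using hd
    · simp

end EBS

/-- For every `ℓ ≥ 1` and `n ≥ 2`, with `N = n^ℓ` and `T = ℓ(n−1)`,
there exist a connection schedule of size `N` and period `T` and an assignment, to each
triple `(t,a,b)`, of a single semi-path from `(a,t)` to the timeline of `b` of latency at
most `T`, such that for every physical edge `e` the set of triples whose semi-path
traverses `e` is finite of cardinality exactly `T·n^{ℓ−1}`. -/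
theorem ebs_semipath_counting (ℓ n : ℕ) (hℓ : 1 ≤ ℓ) (hn : 2 ≤ n) :
    ∃ (S : ConnSched (n ^ ℓ) (ℓ * (n - 1)))
      (sp : ℤ → Fin (n ^ ℓ) → Fin (n ^ ℓ) → List Bool),
      (∀ (t : ℤ) (a b : Fin (n ^ ℓ)),
        (sp t a b).length ≤ ℓ * (n - 1) ∧
        (ORNPath.dest S ⟨(a, t), sp t a b⟩).1 = b) ∧
      (∀ e : Fin (n ^ ℓ) × ℤ,
        {x : ℤ × Fin (n ^ ℓ) × Fin (n ^ ℓ) |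
            ORNPath.usesEdge S ⟨(x.2.1, x.1), sp x.1 x.2.1 x.2.2⟩ e}.Finite ∧
        {x : ℤ × Fin (n ^ ℓ) × Fin (n ^ ℓ) |
            ORNPath.usesEdge S ⟨(x.2.1, x.1), sp x.1 x.2.1 x.2.2⟩ e}.ncard
          = ℓ * (n - 1) * n ^ (ℓ - 1)) := by
  have hT : 0 < ℓ * (n - 1) := Nat.mul_pos hℓ (by omega)
  have : NeZero n := ⟨by omega⟩
  have : NeZero (ℓ * (n - 1)) := ⟨hT.ne'⟩
  have q : ZMod (ℓ * (n - 1)) ≃ Fin ℓ × {s : ZMod n // s ≠ 0} :=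
    Fintype.equivOfCardEq (by simp [ZMod.card, Fintype.card_subtype_compl])
  have e : (Fin ℓ → ZMod n) ≃ Fin (n ^ ℓ) :=
    Fintype.equivOfCardEq (by simp [ZMod.card])
  refine ⟨EBS.sched hT q e,
    fun t a b => EBS.walk q (e.symm b - e.symm a) t (ℓ * (n - 1)), ?_, ?_⟩
  · intro t a b
    refine ⟨by simp [EBS.walk], ?_⟩
    simp only [ORNPath.dest]
    rw [EBS.foldl_walk, EBS.sum_displacement]
    simp
  · rintro ⟨v, τ⟩
    rw [EBS.set_eq_image]
    refine ⟨Finset.finite_toSet _, ?_⟩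
    rw [Set.ncard_coe_finset, Finset.card_map, Finset.card_product, Finset.card_range,
      EBS.card_fixed_coord]
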